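/- Let C ⊆ E be a convex set of diameter at most D > 0, and let T : E → E map C into C and be α-gradually expansive on C with α ∈ (0, √2 - 1). Let c > 0 and β ∈ (0,1) satisfy β² = (1+c)·α·(1 + α + β²), let ε̄ > 0, let y₀ ∈ C satisfy ‖T(y₀) - y₀‖ ≤ ε̄, set λ = (β²·ε̄/D)/(1 + β²·ε̄/D), and let the sequence (y_j) be defined by y_{j+1} = λ·y₀ + (1-λ)·T(y_j). Then for every j ≥ 1, ‖T(y_j) - y_j‖ ≤ (1 - (λ/(1+c))·(c + λ))^j·ε̄ + β²·ε̄. -/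

import Mathlib

/-- For an α-gradually expansive operator (α ∈ (0, √2 - 1)) on a convex set of
diameter at most `D`, with β² = (1+c)α(1 + α + β²) and step size
`λ = (β²ε̄/D)/(1 + β²ε̄/D)`, the fixed-step Halpern iteration started at a point
with fixed-point error at most ε̄ satisfies, for all j ≥ 1,
`‖T y_j - y_j‖ ≤ (1 - (λ/(1+c))(c + λ))^j ε̄ + β² ε̄`. -/
theorem gradually_expansive_halpern_error_decay
    {E : Type*} [NormedAddCommGroup E] [NormedSpace ℝ E]
    (C : Set E) (hC : Convex ℝ C)
    (D : ℝ) (hD0 : 0 < D) (hdiam : ∀ x ∈ C, ∀ y ∈ C, ‖x - y‖ ≤ D)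
    (T : E → E) (hTC : ∀ x ∈ C, T x ∈ C)
    (α : ℝ) (hα0 : 0 < α) (hα1 : α < Real.sqrt 2 - 1)
    (hT : ∀ x ∈ C, ∀ y ∈ C,
      ‖T x - T y‖ ≤ (1 + α * max ‖T x - x‖ ‖T y - y‖ / D) * ‖x - y‖)
    (c : ℝ) (hc : 0 < c) (β : ℝ) (hβ0 : 0 < β) (hβ1 : β < 1)
    (hβ : β ^ 2 = (1 + c) * α * (1 + α + β ^ 2))
    (ε : ℝ) (hε : 0 < ε)
    (y₀ : E) (hy₀C : y₀ ∈ C) (hy₀ : ‖T y₀ - y₀‖ ≤ ε)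
    (l : ℝ) (hl : l = (β ^ 2 * ε / D) / (1 + β ^ 2 * ε / D))
    (y : ℕ → E) (hy0 : y 0 = y₀)
    (hy : ∀ j : ℕ, y (j + 1) = l • y₀ + (1 - l) • T (y j)) :
    ∀ j : ℕ, 1 ≤ j →
      ‖T (y j) - y j‖ ≤
        (1 - (l / (1 + c)) * (c + l)) ^ j * ε + β ^ 2 * ε := by
  have hs : 0 < β ^ 2 * ε / D := by positivity
  have hl0 : 0 < l := by rw [hl]; positivity
  have hl1 : l < 1 := by rw [hl, div_lt_one (by positivity)]; linarith
  have hlD : l * D = (1 - l) * (β ^ 2 * ε) := by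
    rw [hl]; field_simp; ring
  have hlD' : (1 - l) * (D + β ^ 2 * ε) = D := by linarith
  have h1l : 0 < 1 - l := by linarith
  obtain ⟨K, hK⟩ : ∃ K, K = (1 - l) * (1 + α + β ^ 2) * ε := ⟨_, rfl⟩
  obtain ⟨q, hq⟩ : ∃ q, q = 1 - (l / (1 + c)) * (c + l) := ⟨_, rfl⟩
  have hKl : α * K / D = l / (1 + c) := by
    rw [div_eq_div_iff hD0.ne' (by positivity), hlD, hK]
    linear_combination (-(1 - l) * ε) * hβ
  have hqK : (1 - l) * (1 + α * K / D) = q := by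
    rw [hKl, hq]; field_simp; ring
  have hK0 : 0 < K := by rw [hK]; positivity
  have hq0 : 0 ≤ q := by rw [← hqK]; positivity
  have hq1 : q ≤ 1 := by
    rw [hq]
    have : 0 ≤ (l / (1 + c)) * (c + l) := by positivity
    linarith
  have hyC : ∀ j, y j ∈ C := by
    intro j
    induction j with
    | zero => rw [hy0]; exact hy₀C
    | succ j ih => rw [hy]; exact hC hy₀C (hTC _ ih) hl0.le h1l.le (by ring)
  have hrD : ∀ j, ‖T (y j) - y j‖ ≤ D := fun j => hdiam _ (hTC _ (hyC j)) _ (hyC j)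
  have hr0 : ‖T (y 0) - y 0‖ ≤ K := by
    have h1 := hrD 0
    have h2 : ‖T (y 0) - y 0‖ ≤ ε := by rw [hy0]; exact hy₀
    rcases le_total ε D with h | h
    · refine h2.trans ?_
      have : (1 - l) * (1 + α + β ^ 2) ≥ 1 := by
        have h3 : D ≤ (1 - l) * (1 + α + β ^ 2) * D := by
          calc D = (1 - l) * (D + β ^ 2 * ε) := hlD'.symm
            _ ≤ (1 - l) * ((1 + α + β ^ 2) * D) := by
              apply mul_le_mul_of_nonneg_left _ h1l.le
              nlinarith [mul_le_mul_of_nonneg_left h (sq_nonneg β), mul_pos hα0 hD0]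
            _ = _ := by ring
        by_contra hh
        push Not at hh
        nlinarith
      rw [hK]; nlinarith
    · refine h1.trans ?_
      calc D = (1 - l) * (D + β ^ 2 * ε) := hlD'.symm
        _ ≤ (1 - l) * ((1 + α + β ^ 2) * ε) := by
          apply mul_le_mul_of_nonneg_left _ h1l.le
          nlinarith [mul_pos hα0 hε]
        _ = K := by rw [hK]; ring
  have hstep : ∀ j M, ‖T (y j) - y j‖ ≤ M → ‖T (y (j+1)) - y (j+1)‖ ≤ M →
      ‖T (y (j+1)) - T (y j)‖ ≤ (1 + α * M / D) * ‖y (j+1) - y j‖ := by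
    intro j M h1 h2
    refine (hT _ (hyC (j+1)) _ (hyC j)).trans ?_
    have := max_le h2 h1
    gcongr
  have hr : ∀ j M, ‖T (y j) - y j‖ ≤ M → ‖T (y (j+1)) - y (j+1)‖ ≤ M →
      ‖T (y (j+1)) - y (j+1)‖ ≤
        (1 - l) * (β ^ 2 * ε) + (1 - l) * ((1 + α * M / D) * ‖y (j+1) - y j‖) := by
    intro j M h1 h2
    have h3 := hstep j M h1 h2
    have h4 : T (y (j+1)) - y (j+1) =
        l • (T (y (j+1)) - y₀) + (1 - l) • (T (y (j+1)) - T (y j)) := by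
      have : y (j+1) = l • y₀ + (1 - l) • T (y j) := hy j
      generalize T (y (j+1)) = z
      rw [this]; module
    have h5 : ‖T (y (j+1)) - y (j+1)‖ ≤
        l * ‖T (y (j+1)) - y₀‖ + (1 - l) * ‖T (y (j+1)) - T (y j)‖ := by
      conv_lhs => rw [h4]
      refine (norm_add_le _ _).trans ?_
      rw [norm_smul, norm_smul, Real.norm_of_nonneg hl0.le, Real.norm_of_nonneg h1l.le]
    have h6 := hdiam _ (hTC _ (hyC (j+1))) _ hy₀C
    rw [← hlD]
    refine h5.trans (add_le_add ?_ ?_)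
    · exact mul_le_mul_of_nonneg_left h6 hl0.le
    · exact mul_le_mul_of_nonneg_left h3 h1l.le
  have key : ∀ j, ‖T (y j) - y j‖ ≤ K ∧ ‖y (j+1) - y j‖ ≤ (1 - l) * q ^ j * ε ∧
      ‖T (y (j+1)) - y (j+1)‖ ≤ K := by
    have hrK : ∀ j, ‖y (j+1) - y j‖ ≤ (1 - l) * q ^ j * ε → ‖T (y (j+1)) - y (j+1)‖ ≤ K := by
      intro j hd
      have h1 := hr j D (hrD j) (hrD (j+1))
      rw [mul_div_assoc, div_self hD0.ne', mul_one] at h1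
      have h2 : ‖y (j+1) - y j‖ ≤ ε := by
        refine hd.trans ?_
        have h3 : (1 - l) * q ^ j ≤ 1 :=
          mul_le_one₀ (by linarith) (pow_nonneg hq0 j) (pow_le_one₀ hq0 hq1)
        nlinarith
      refine h1.trans ?_
      have h3 : (1 - l) * ((1 + α) * ‖y (j+1) - y j‖) ≤ (1 - l) * ((1 + α) * ε) := by gcongr
      rw [hK]; linarith
    intro j
    induction j with
    | zero =>
      have h1 : ‖y (0+1) - y 0‖ ≤ (1 - l) * q ^ 0 * ε := by
        have : y (0+1) - y 0 = (1 - l) • (T y₀ - y₀) := by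
          rw [hy 0, hy0]; module
        rw [this, norm_smul, Real.norm_of_nonneg h1l.le, pow_zero, mul_one]
        exact mul_le_mul_of_nonneg_left hy₀ h1l.le
      exact ⟨hr0, h1, hrK 0 h1⟩
    | succ j ih =>
      obtain ⟨i1, i2, i3⟩ := ih
      have h1 : ‖y (j+1+1) - y (j+1)‖ ≤ (1 - l) * q ^ (j+1) * ε := by
        have : y (j+1+1) - y (j+1) = (1 - l) • (T (y (j+1)) - T (y j)) := by
          rw [hy (j+1)]
          have : y (j+1) = l • y₀ + (1 - l) • T (y j) := hy j
          generalize T (y (j+1)) = z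
          rw [this]; module
        rw [this, norm_smul, Real.norm_of_nonneg h1l.le]
        calc _ ≤ (1 - l) * ((1 + α * K / D) * ‖y (j+1) - y j‖) :=
              mul_le_mul_of_nonneg_left (hstep j K i1 i3) h1l.le
          _ = q * ‖y (j+1) - y j‖ := by rw [← hqK]; ring
          _ ≤ q * ((1 - l) * q ^ j * ε) := mul_le_mul_of_nonneg_left i2 hq0
          _ = _ := by ring
      exact ⟨i3, h1, hrK _ h1⟩
  intro j hj
  obtain ⟨k, rfl⟩ : ∃ k, j = k + 1 := ⟨j - 1, by omega⟩
  obtain ⟨i1, i2, i3⟩ := key k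
  rw [← hq]
  have h1 := hr k K i1 i3
  have h2 : (1 - l) * ((1 + α * K / D) * ‖y (k+1) - y k‖) = q * ‖y (k+1) - y k‖ := by
    rw [← hqK]; ring
  rw [h2] at h1
  have h3 : q * ‖y (k+1) - y k‖ ≤ q * ((1 - l) * q ^ k * ε) := mul_le_mul_of_nonneg_left i2 hq0
  have h4 : q * ((1 - l) * q ^ k * ε) = (1 - l) * (q ^ (k+1) * ε) := by ring
  have h5 : 0 ≤ l * (q ^ (k+1) * ε) := by positivity
  have h6 : 0 ≤ l * (β ^ 2 * ε) := by positivity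
  linarith
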